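/- Let G be a connected bipartite finite simple graph on vertex set V = {v_1,...,v_n} with bipartition (V_1, V_2), let A be a proper subset of V_1, and suppose F = H_A ∩ R+A is a facet of the edge cone. If N(A) = V_2, then A = V_1 \ {v_i} for some vertex v_i ∈ V_1, and F = R+A ∩ {x ∈ R^n : x_i = 0}. -/

import Mathlib

open Finset

/-- The edge vector `e_i + e_j` associated to an edge `{i, j}`. -/
def edgeVector {V : Type*} [DecidableEq V] (i j : V) : V → ℝ :=
  fun k => (if k = i then 1 else 0) + (if k = j then 1 else 0)

/-- The edge cone of a graph `G`: all nonnegative real linear combinations of the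
edge vectors of `G`. -/
def edgeCone {V : Type*} [Fintype V] [DecidableEq V] (G : SimpleGraph V) :
    Set (V → ℝ) :=
  { x | ∃ c : V → V → ℝ, (∀ i j, 0 ≤ c i j) ∧ (∀ i j, ¬ G.Adj i j → c i j = 0) ∧
        x = ∑ i, ∑ j, c i j • edgeVector i j }

/-- The neighbor set `N(A)`: vertices adjacent to at least one vertex of `A`. -/
def nbr {V : Type*} [Fintype V] [DecidableEq V] (G : SimpleGraph V)
    [DecidableRel G.Adj] (A : Finset V) : Finset V :=
  Finset.univ.filter fun v => ∃ a ∈ A, G.Adj v a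

/-- `A` is an independent set of vertices of `G`. -/
def IsIndep {V : Type*} (G : SimpleGraph V) (A : Finset V) : Prop :=
  ∀ a ∈ A, ∀ b ∈ A, ¬ G.Adj a b

/-- `F` is a face of the cone `Q`: `F = Q ∩ {x | ⟪x, a⟫ = 0}` for some `a` with
`Q ⊆ {x | ⟪x, a⟫ ≤ 0}`. -/
def IsFace {V : Type*} [Fintype V] (Q F : Set (V → ℝ)) : Prop :=
  ∃ a : V → ℝ, (∀ x ∈ Q, ∑ i, x i * a i ≤ 0) ∧ F = Q ∩ {x | ∑ i, x i * a i = 0}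

/-- `F` is a facet of the cone `Q`: a face whose linear span has dimension one less
than the dimension of the linear span of `Q`. -/
def IsFacet {V : Type*} [Fintype V] (Q F : Set (V → ℝ)) : Prop :=
  IsFace Q F ∧
    Module.finrank ℝ (Submodule.span ℝ F) = Module.finrank ℝ (Submodule.span ℝ Q) - 1

/-! On the edge cone `Q` of a graph with bipartition `(V₁, V₂)` the sums of the coordinates over
`V₁` and over `V₂` agree. Hence, when `N(A) = V₂`, the hyperplane `H_A` cuts out of `Q` the
points whose nonnegative coordinates at `V₁ \ A` sum to zero, i.e. the points vanishing on
`V₁ \ A`. If `V₁` has at least two vertices, those of `V₁ \ A` are pairwise nonadjacent and each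
lies on an edge, so their coordinates are linearly independent functionals on the span of `Q`, and
the face has codimension at least `#(V₁ \ A)`. For a facet this number is at most one, and it is
positive as `A ≠ V₁`. -/

lemma finrank_add_finrank_map_le {K E E' : Type*} [DivisionRing K] [AddCommGroup E] [Module K E]
    [AddCommGroup E'] [Module K E'] {P Q : Submodule K E} [FiniteDimensional K Q]
    (f : E →ₗ[K] E') (hPQ : P ≤ Q) (hP : P ≤ LinearMap.ker f) :
    Module.finrank K P + Module.finrank K (Q.map f) ≤ Module.finrank K Q := by
  have hker : P.comap Q.subtype ≤ LinearMap.ker (f.domRestrict Q) := fun x hx => hP hx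
  have hle := Submodule.finrank_mono hker
  rw [(Submodule.comapSubtypeEquivOfLe hPQ).finrank_eq] at hle
  rw [← LinearMap.finrank_range_add_finrank_ker (f.domRestrict Q), LinearMap.range_domRestrict,
    add_comm]
  gcongr

lemma isIndep_of_isBipartiteWith {V : Type*} {G : SimpleGraph V} {V₁ V₂ S : Finset V}
    (hG : G.IsBipartiteWith V₁ V₂) (hS : S ⊆ V₁) : IsIndep G S :=
  fun _ ha _ hb hab =>
    Set.disjoint_left.1 hG.disjoint (hS hb) (hG.mem_of_mem_adj (hS ha) hab)

section EdgeCone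

variable {V : Type*} [DecidableEq V]

lemma edgeVector_eq_single_add_single (i j : V) :
    edgeVector i j = Pi.single i 1 + Pi.single j 1 := by
  ext k
  simp only [edgeVector, Pi.add_apply, Pi.single_apply]

lemma sum_edgeVector (S : Finset V) (i j : V) :
    ∑ k ∈ S, edgeVector i j k = (if i ∈ S then 1 else 0) + (if j ∈ S then 1 else 0) := by
  simp only [edgeVector, sum_add_distrib, sum_ite_eq']

variable [Fintype V] {G : SimpleGraph V} {V₁ V₂ A S : Finset V} {x : V → ℝ}

lemma edgeVector_mem_edgeCone {a b : V} (h : G.Adj a b) : edgeVector a b ∈ edgeCone G := by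
  refine ⟨fun i j => if i = a ∧ j = b then 1 else 0, fun i j => by positivity, ?_, ?_⟩
  · rintro i j hij
    exact if_neg fun ⟨hi, hj⟩ => hij (hi ▸ hj ▸ h)
  · simp [ite_and, ite_smul]

lemma edgeCone_subset {C : PointedCone ℝ (V → ℝ)}
    (hC : ∀ i j, G.Adj i j → edgeVector i j ∈ C) : edgeCone G ⊆ C := by
  rintro _ ⟨c, hc, hc₀, rfl⟩
  refine sum_mem fun i _ => sum_mem fun j _ => ?_
  by_cases hij : G.Adj i j
  · exact C.smul_mem (hc i j) (hC i j hij)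
  · simp [hc₀ i j hij]

lemma nonneg_of_mem_edgeCone (hx : x ∈ edgeCone G) : 0 ≤ x := by
  have hsub : edgeCone G ⊆ PointedCone.positive ℝ (V → ℝ) := edgeCone_subset fun i j _ => by
    rw [PointedCone.mem_positive, edgeVector_eq_single_add_single]
    exact add_nonneg (Pi.single_nonneg.2 zero_le_one) (Pi.single_nonneg.2 zero_le_one)
  exact (PointedCone.mem_positive ℝ (V → ℝ)).1 (hsub hx)

lemma sum_eq_sum_of_mem_edgeCone (hG : G.IsBipartiteWith V₁ V₂) (hx : x ∈ edgeCone G) :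
    ∑ v ∈ V₁, x v = ∑ v ∈ V₂, x v := by
  let coordSum (S : Finset V) : (V → ℝ) →ₗ[ℝ] ℝ := ∑ v ∈ S, LinearMap.proj v
  have hsub : edgeCone G ⊆ PointedCone.ofSubmodule
      (LinearMap.eqLocus (coordSum V₁) (coordSum V₂)) := edgeCone_subset fun i j hij => by
    have hV := disjoint_left.1 (disjoint_coe.1 hG.disjoint)
    have hV' := disjoint_right.1 (disjoint_coe.1 hG.disjoint)
    simp only [PointedCone.mem_ofSubmodule_iff, LinearMap.mem_eqLocus, coordSum,
      LinearMap.sum_apply, LinearMap.proj_apply, sum_edgeVector]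
    rcases hG.mem_of_adj hij with ⟨hi, hj⟩ | ⟨hi, hj⟩ <;> rw [mem_coe] at hi hj
    · simp [hi, hj, hV hi, hV' hj]
    · simp [hi, hj, hV hj, hV' hi]
  simpa [coordSum] using hsub hx

lemma sum_eq_sum_iff_of_mem_edgeCone (hG : G.IsBipartiteWith V₁ V₂) (hA : A ⊆ V₁)
    (hx : x ∈ edgeCone G) :
    ∑ v ∈ A, x v = ∑ v ∈ V₂, x v ↔ ∀ v ∈ V₁ \ A, x v = 0 := by
  rw [← sum_eq_sum_of_mem_edgeCone hG hx, ← sum_sdiff hA, right_eq_add,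
    sum_eq_zero_iff_of_nonneg fun v _ => nonneg_of_mem_edgeCone hx v]

lemma map_span_edgeCone_eq_top (hS : IsIndep G S) (hadj : ∀ v ∈ S, ∃ w, G.Adj v w) :
    (Submodule.span ℝ (edgeCone G)).map (LinearMap.funLeft ℝ ℝ ((↑) : S → V)) = ⊤ := by
  rw [eq_top_iff, ← (Pi.basisFun ℝ S).span_eq, Submodule.span_le]
  rintro _ ⟨⟨v, hv⟩, rfl⟩
  obtain ⟨w, hvw⟩ := hadj v hv
  have hw : w ∉ S := fun hw => hS v hv w hw hvw
  refine ⟨edgeVector v w, Submodule.subset_span (edgeVector_mem_edgeCone hvw), ?_⟩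
  ext ⟨u, hu⟩
  have huw : u ≠ w := ne_of_mem_of_not_mem hu hw
  simp [edgeVector_eq_single_add_single, LinearMap.funLeft_apply, Pi.single_apply, huw]

lemma finrank_span_edgeCone_inter_add_card_le (hS : IsIndep G S)
    (hadj : ∀ v ∈ S, ∃ w, G.Adj v w) :
    Module.finrank ℝ (Submodule.span ℝ (edgeCone G ∩ {x | ∀ v ∈ S, x v = 0})) + #S ≤
      Module.finrank ℝ (Submodule.span ℝ (edgeCone G)) := by
  have hker : Submodule.span ℝ (edgeCone G ∩ {x | ∀ v ∈ S, x v = 0}) ≤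
      LinearMap.ker (LinearMap.funLeft ℝ ℝ ((↑) : S → V)) :=
    Submodule.span_le.2 fun x hx => funext fun v => hx.2 v v.2
  have hle := finrank_add_finrank_map_le _ (Submodule.span_mono Set.inter_subset_left) hker
  rwa [map_span_edgeCone_eq_top hS hadj, finrank_top, Module.finrank_fintype_fun_eq_card,
    Fintype.card_coe] at hle

lemma card_le_one_of_isFacet (hS : IsIndep G S) (hadj : ∀ v ∈ S, ∃ w, G.Adj v w)
    (hfacet : IsFacet (edgeCone G) (edgeCone G ∩ {x | ∀ v ∈ S, x v = 0})) : #S ≤ 1 := by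
  have hle := finrank_span_edgeCone_inter_add_card_le hS hadj
  have hdim := hfacet.2
  omega

lemma setOf_sum_eq_sum_inter_edgeCone (hG : G.IsBipartiteWith V₁ V₂) (hA : A ⊆ V₁) :
    {x : V → ℝ | ∑ v ∈ A, x v = ∑ v ∈ V₂, x v} ∩ edgeCone G =
      edgeCone G ∩ {x | ∀ v ∈ V₁ \ A, x v = 0} := by
  rw [Set.inter_comm]
  ext x
  exact and_congr_right (sum_eq_sum_iff_of_mem_edgeCone hG hA)

-- The one-vertex graph is connected but has no edge, whence the premise `Nontrivial` of `hadj`.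
theorem stmt9_general [DecidableRel G.Adj] (hG : G.IsBipartiteWith V₁ V₂)
    (hadj : (V₁ : Set V).Nontrivial → ∀ v ∈ V₁, ∃ w, G.Adj v w)
    (hA : A ⊆ V₁) (hAne : A ≠ V₁)
    (hfacet : IsFacet (edgeCone G)
      ({x : V → ℝ | ∑ v ∈ A, x v = ∑ v ∈ nbr G A, x v} ∩ edgeCone G))
    (hNA : nbr G A = V₂) :
    ∃ v ∈ V₁, A = V₁.erase v ∧
      {x : V → ℝ | ∑ v ∈ A, x v = ∑ v ∈ nbr G A, x v} ∩ edgeCone G =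
        edgeCone G ∩ {x : V → ℝ | x v = 0} := by
  rw [hNA, setOf_sum_eq_sum_inter_edgeCone hG hA] at hfacet ⊢
  have hcard : #(V₁ \ A) ≤ 1 := by
    by_contra! h
    have hV₁ : (V₁ : Set V).Nontrivial :=
      one_lt_card_iff_nontrivial.1 (h.trans_le (card_le_card sdiff_subset))
    exact h.not_ge <| card_le_one_of_isFacet (isIndep_of_isBipartiteWith hG sdiff_subset)
      (fun v hv => hadj hV₁ v (sdiff_subset hv)) hfacet
  have hpos : 0 < #(V₁ \ A) := card_pos.2 <|
    sdiff_nonempty.2 fun h => hAne (hA.antisymm h)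
  obtain ⟨v, hv⟩ := card_eq_one.1 (hcard.antisymm hpos)
  refine ⟨v, sdiff_subset (hv ▸ mem_singleton_self v), ?_, ?_⟩
  · rw [erase_eq, ← hv, Finset.sdiff_sdiff_eq_self hA]
  · simp [hv]

end EdgeCone

/-- For a connected bipartite graph `G` with bipartition `(V₁, V₂)`, a proper subset
`A ⊊ V₁` with `F = H_A ∩ ℝ₊𝒜` a facet and `N(A) = V₂`: then `A = V₁ \ {v}` for some
`v ∈ V₁` and `F = ℝ₊𝒜 ∩ {x | x_v = 0}`. -/
theorem stmt9 {n : ℕ} (G : SimpleGraph (Fin n)) [DecidableRel G.Adj]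
    (hG : G.Connected)
    (V₁ V₂ : Finset (Fin n)) (hdisj : Disjoint V₁ V₂)
    (hunion : V₁ ∪ V₂ = Finset.univ)
    (hbip : ∀ i j, G.Adj i j → (i ∈ V₁ ∧ j ∈ V₂) ∨ (i ∈ V₂ ∧ j ∈ V₁))
    (A : Finset (Fin n)) (hAsub : A ⊆ V₁) (hAne : A ≠ V₁)
    (hfacet : IsFacet (edgeCone G)
      ({x : Fin n → ℝ | ∑ i ∈ A, x i = ∑ i ∈ nbr G A, x i} ∩ edgeCone G))
    (hNA : nbr G A = V₂) :
    ∃ v ∈ V₁, A = V₁.erase v ∧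
      {x : Fin n → ℝ | ∑ i ∈ A, x i = ∑ i ∈ nbr G A, x i} ∩ edgeCone G =
        edgeCone G ∩ {x : Fin n → ℝ | x v = 0} := by
  refine stmt9_general ⟨disjoint_coe.2 hdisj, hbip⟩ (fun hV₁ v _ => ?_) hAsub hAne hfacet hNA
  have : Nontrivial (Fin n) := Set.nontrivial_of_nontrivial hV₁
  exact hG.preconnected.exists_adj_of_nontrivial v
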